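/- arXiv:2301.09044 — 5 statements merged into one kernel-verified Lean document; each statement's English description precedes it below -/
import Mathlib

section
/- Let φ, ψ : ℝ → ℝ be nonnegative functions satisfying 𝟙[v ≥ 0] ≤ φ(v) and 𝟙[v ≥ 0] ≤ ψ(v) for all v ∈ ℝ. Then for every c ∈ (0,1), α, β > 0, t ∈ ℝ and a ∈ {−1, +1}, the induced rejection loss satisfies 𝟙[a = −1]·𝟙[t > 0] + c·𝟙[t ≤ 0] ≤ φ(α(t − a)/2) + c·ψ(−β t). -/
/-- The induced rejection loss `ℓ₂(t, a) = 𝟙[a = −1]·𝟙[t > 0] + c·𝟙[t ≤ 0]`. -/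
noncomputable def inducedRejectionLoss (c t a : ℝ) : ℝ :=
  (if a = -1 then (1 : ℝ) else 0) * (if 0 < t then (1 : ℝ) else 0) +
    c * (if t ≤ 0 then (1 : ℝ) else 0)

theorem ite_le_apply_of_imp {R S : Type*} [Zero R] [LE R] [DecidableLE R] [Zero S] [One S]
    [Preorder S] [ZeroLEOneClass S] {φ : R → S} (hφ : ∀ v, (if 0 ≤ v then 1 else 0) ≤ φ v)
    {p : Prop} [Decidable p] {v : R} (h : p → 0 ≤ v) : (if p then 1 else 0) ≤ φ v :=
  calc
    (if p then (1 : S) else 0) ≤ if 0 ≤ v then 1 else 0 := by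
      by_cases hp : p
      · rw [if_pos hp, if_pos (h hp)]
      · rw [if_neg hp]
        exact ite_nonneg zero_le_one le_rfl
    _ ≤ φ v := hφ v

theorem inducedRejectionLoss_eq_ite_and_add (c t a : ℝ) :
    inducedRejectionLoss c t a =
      (if a = -1 ∧ 0 < t then 1 else 0) + c * (if t ≤ 0 then 1 else 0) := by
  rw [inducedRejectionLoss, ite_zero_mul_ite_zero, one_mul]

theorem general_surrogate_upper_bounds_induced_general {φ ψ : ℝ → ℝ}
    (hφ : ∀ v : ℝ, (if 0 ≤ v then (1 : ℝ) else 0) ≤ φ v)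
    (hψ : ∀ v : ℝ, (if 0 ≤ v then (1 : ℝ) else 0) ≤ ψ v)
    {c α β : ℝ} (t a : ℝ) (hc : 0 ≤ c) (hα : 0 ≤ α) (hβ : 0 ≤ β) :
    inducedRejectionLoss c t a ≤ φ (α * (t - a) / 2) + c * ψ (-β * t) := by
  have classifier_margin_nonneg : a = -1 ∧ 0 < t → 0 ≤ α * (t - a) / 2 := by
    rintro ⟨rfl, ht⟩
    have : 0 ≤ t - -1 := by linarith
    positivity
  have rejector_margin_nonneg : t ≤ 0 → 0 ≤ -β * t :=
    mul_nonneg_of_nonpos_of_nonpos (neg_nonpos.mpr hβ)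
  rw [inducedRejectionLoss_eq_ite_and_add]
  gcongr
  · exact ite_le_apply_of_imp hφ classifier_margin_nonneg
  · exact ite_le_apply_of_imp hψ rejector_margin_nonneg

/-- any pair of nonnegative functions upper-bounding the indicator
`𝟙[v ≥ 0]` yields an upper bound on the induced rejection loss. -/
theorem general_surrogate_upper_bounds_induced (φ ψ : ℝ → ℝ)
    (hφ_nonneg : ∀ v : ℝ, 0 ≤ φ v) (hψ_nonneg : ∀ v : ℝ, 0 ≤ ψ v)
    (hφ : ∀ v : ℝ, (if 0 ≤ v then (1 : ℝ) else 0) ≤ φ v)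
    (hψ : ∀ v : ℝ, (if 0 ≤ v then (1 : ℝ) else 0) ≤ ψ v)
    (c α β t a : ℝ) (hc : 0 < c) (hc1 : c < 1) (hα : 0 < α) (hβ : 0 < β)
    (ha : a = -1 ∨ a = 1) :
    inducedRejectionLoss c t a ≤ φ (α * (t - a) / 2) + c * ψ (-β * t) :=
  general_surrogate_upper_bounds_induced_general hφ hψ t a hc.le hα.le hβ.le
end

section
/- For every c ∈ (0,1), α, β > 0 and η ∈ [0,1], the infimum over t ∈ ℝ of C₁(t, η) equals (1/(1 − γ))·(2βc/α)^γ·I_η^{1−γ}, where γ = α/(α + 2β) and I_η = η·exp(−α/2) + (1 − η)·exp(α/2). -/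
/-- The surrogate rejection loss `ℓ₁(t, a) = exp(α(t − a)/2) + c·exp(−β t)`. -/
noncomputable def surrogateRejectionLoss (c α β t a : ℝ) : ℝ :=
  Real.exp (α * (t - a) / 2) + c * Real.exp (-β * t)

/-- The conditional risk of the surrogate rejection loss:
`C₁(t, η) = η·ℓ₁(t, +1) + (1 − η)·ℓ₁(t, −1)`. -/
noncomputable def condRiskSurrogate (c α β t η : ℝ) : ℝ :=
  η * surrogateRejectionLoss c α β t 1 + (1 - η) * surrogateRejectionLoss c α β t (-1)

/-- `I_η = η·exp(−α/2) + (1 − η)·exp(α/2)`. -/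
noncomputable def Ieta (α η : ℝ) : ℝ :=
  η * Real.exp (-α / 2) + (1 - η) * Real.exp (α / 2)

/-!
With `γ = α / (α + 2β)` and `A = 2βc / α`, the conditional risk is `(1 - γ)⁻¹` times the
`(1 - γ, γ)`-weighted arithmetic mean of `I_η exp (αt/2)` and `A exp (-βt)`. The weights balance the
exponents, so the corresponding geometric mean is `I_η ^ (1 - γ) * A ^ γ` for every `t`; it bounds
the arithmetic mean from below, with equality at the `t` where the two terms agree.
-/

section WeightedExpSum

variable {w₁ w₂ p q A B : ℝ}

lemma mul_exp_rpow_mul_mul_exp_rpow (hA : 0 ≤ A) (hB : 0 ≤ B) (hpq : w₁ * p = w₂ * q) (t : ℝ) :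
    (A * Real.exp (p * t)) ^ w₁ * (B * Real.exp (-q * t)) ^ w₂ = A ^ w₁ * B ^ w₂ := by
  have exponents_cancel : p * t * w₁ + -q * t * w₂ = 0 := by linear_combination t * hpq
  calc (A * Real.exp (p * t)) ^ w₁ * (B * Real.exp (-q * t)) ^ w₂
      = A ^ w₁ * B ^ w₂ * Real.exp (p * t * w₁ + -q * t * w₂) := by
        rw [Real.mul_rpow hA (Real.exp_nonneg _), Real.mul_rpow hB (Real.exp_nonneg _),
          ← Real.exp_mul, ← Real.exp_mul, Real.exp_add]
        ring
    _ = A ^ w₁ * B ^ w₂ := by rw [exponents_cancel, Real.exp_zero, mul_one]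

lemma exists_mul_exp_eq_mul_exp_neg (hA : 0 < A) (hB : 0 < B) (hpq : p + q ≠ 0) :
    ∃ t, A * Real.exp (p * t) = B * Real.exp (-q * t) := by
  refine ⟨(Real.log B - Real.log A) / (p + q), ?_⟩
  have exponents_agree : Real.log A + p * ((Real.log B - Real.log A) / (p + q)) =
      Real.log B + -q * ((Real.log B - Real.log A) / (p + q)) := by
    field_simp
    ring
  simpa only [Real.exp_add, Real.exp_log hA, Real.exp_log hB] using
    congrArg Real.exp exponents_agree

theorem isLeast_range_weighted_exp_sum (hw₁ : 0 ≤ w₁) (hw₂ : 0 ≤ w₂) (hw : w₁ + w₂ = 1)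
    (hwpq : w₁ * p = w₂ * q) (hpq : p + q ≠ 0) (hA : 0 < A) (hB : 0 < B) :
    IsLeast (Set.range fun t => w₁ * (A * Real.exp (p * t)) + w₂ * (B * Real.exp (-q * t)))
      (A ^ w₁ * B ^ w₂) := by
  constructor
  · obtain ⟨t, ht⟩ := exists_mul_exp_eq_mul_exp_neg hA hB hpq
    have hpos : 0 < B * Real.exp (-q * t) := by positivity
    refine ⟨t, ?_⟩
    dsimp only
    rw [← mul_exp_rpow_mul_mul_exp_rpow hA.le hB.le hwpq t, ht, ← Real.rpow_add hpos, ← add_mul,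
      hw, one_mul, Real.rpow_one]
  · rintro _ ⟨t, rfl⟩
    rw [← mul_exp_rpow_mul_mul_exp_rpow hA.le hB.le hwpq t]
    exact Real.geom_mean_le_arith_mean2_weighted hw₁ hw₂ (by positivity) (by positivity) hw

end WeightedExpSum

lemma div_add_mem_Ioo_of_mul_pos {a b : ℝ} (hab : 0 < a * b) :
    a / (a + b) ∈ Set.Ioo (0 : ℝ) 1 := by
  rcases mul_pos_iff.mp hab with ⟨ha, hb⟩ | ⟨ha, hb⟩
  · exact ⟨by positivity, (div_lt_one (by positivity)).mpr (by linarith)⟩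
  · exact ⟨div_pos_of_neg_of_neg ha (by linarith),
      (div_lt_one_of_neg (by linarith)).mpr (by linarith)⟩

lemma Ieta_pos (α : ℝ) {η : ℝ} (hη : η ∈ Set.Icc (0 : ℝ) 1) : 0 < Ieta α η :=
  convex_Ioi (0 : ℝ) (Real.exp_pos (-α / 2)) (Real.exp_pos (α / 2)) hη.1
    (sub_nonneg.mpr hη.2) (add_sub_cancel η 1)

lemma condRiskSurrogate_eq_Ieta_mul_exp_add (c α β t η : ℝ) :
    condRiskSurrogate c α β t η =
      Ieta α η * Real.exp (α / 2 * t) + c * Real.exp (-β * t) := by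
  have exp_pos_label : Real.exp (α * (t - 1) / 2) = Real.exp (-α / 2) * Real.exp (α / 2 * t) := by
    rw [← Real.exp_add]
    ring_nf
  have exp_neg_label : Real.exp (α * (t - -1) / 2) = Real.exp (α / 2) * Real.exp (α / 2 * t) := by
    rw [← Real.exp_add]
    ring_nf
  rw [condRiskSurrogate, surrogateRejectionLoss, surrogateRejectionLoss, exp_pos_label,
    exp_neg_label, Ieta]
  ring

lemma condRiskSurrogate_eq_mul_weighted_exp_sum {α β : ℝ} (hα : α ≠ 0) (hβ : β ≠ 0)
    (hαβ : α + 2 * β ≠ 0) (c t η : ℝ) :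
    condRiskSurrogate c α β t η =
      1 / (1 - α / (α + 2 * β)) *
        ((1 - α / (α + 2 * β)) * (Ieta α η * Real.exp (α / 2 * t)) +
          α / (α + 2 * β) * (2 * β * c / α * Real.exp (-β * t))) := by
  have one_sub_weight : 1 - α / (α + 2 * β) = 2 * β / (α + 2 * β) := by
    field_simp
    ring
  rw [condRiskSurrogate_eq_Ieta_mul_exp_add, one_sub_weight]
  field_simp

theorem condRiskSurrogate_inf_general {c α β η : ℝ} (hc : 0 < c) (hαβ : 0 < α * β)
    (hI : 0 < Ieta α η) :
    IsLeast (Set.range fun t => condRiskSurrogate c α β t η)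
      ((1 / (1 - α / (α + 2 * β))) * (2 * β * c / α) ^ (α / (α + 2 * β)) *
        Ieta α η ^ (1 - α / (α + 2 * β))) := by
  have hα : α ≠ 0 := left_ne_zero_of_mul hαβ.ne'
  have hβ : β ≠ 0 := right_ne_zero_of_mul hαβ.ne'
  obtain ⟨hγ₀, hγ₁⟩ := div_add_mem_Ioo_of_mul_pos (show 0 < α * (2 * β) by linarith)
  have one_sub_pos : 0 < 1 - α / (α + 2 * β) := sub_pos.mpr hγ₁
  have hsum : α + 2 * β ≠ 0 := (div_ne_zero_iff.mp hγ₀.ne').2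
  have hA : 0 < 2 * β * c / α := by
    have hratio : 0 < β / α := div_pos_iff.mpr (mul_pos_iff.mp (mul_comm α β ▸ hαβ))
    rw [show 2 * β * c / α = 2 * c * (β / α) by ring]
    positivity
  have balance : (1 - α / (α + 2 * β)) * (α / 2) = α / (α + 2 * β) * β := by
    field_simp
    ring
  have exponent_sum : α / 2 + β ≠ 0 := by
    contrapose! hsum
    linarith
  have weighted_least := isLeast_range_weighted_exp_sum one_sub_pos.le hγ₀.le
    (sub_add_cancel _ _) balance exponent_sum hI hA
  have scaled_least := (monotone_mul_left_of_nonneg (one_div_nonneg.mpr one_sub_pos.le)).map_isLeast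
    weighted_least
  rw [← Set.range_comp] at scaled_least
  rw [mul_assoc, mul_comm ((2 * β * c / α) ^ _)]
  simpa only [Function.comp_def, condRiskSurrogate_eq_mul_weighted_exp_sum hα hβ hsum]
    using scaled_least

/-- the infimum over `t ∈ ℝ` of `C₁(t, η)` equals
`(1/(1 − γ))·(2βc/α)^γ·I_η^{1−γ}` with `γ = α/(α + 2β)`. -/
theorem condRiskSurrogate_inf (c α β η : ℝ)
    (hc : 0 < c) (hc1 : c < 1) (hα : 0 < α) (hβ : 0 < β)
    (hη : η ∈ Set.Icc (0 : ℝ) 1) :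
    IsGLB (Set.range fun t => condRiskSurrogate c α β t η)
      ((1 / (1 - α / (α + 2 * β))) * (2 * β * c / α) ^ (α / (α + 2 * β)) *
        Ieta α η ^ (1 - α / (α + 2 * β))) :=
  (condRiskSurrogate_inf_general hc (mul_pos hα hβ) (Ieta_pos α hη)).isGLB
end

section
/- Let c ∈ (0,1) and α, β > 0 satisfy 2βc/α = Ī_c, where Ī_c = c·exp(α/2) + (1 − c)·exp(−α/2). Then for every η ∈ [0,1], the infimum of C₁(t, η) over the set {t ∈ ℝ : t·(η − (1 − c)) ≤ 0} is attained at t = 0 and equals C₁(0, η) = I_η + c. -/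
/-- `Ī_c = c·exp(α/2) + (1 − c)·exp(−α/2)`. -/
noncomputable def Ibar (c α : ℝ) : ℝ :=
  c * Real.exp (α / 2) + (1 - c) * Real.exp (-α / 2)

/-!
Pulling `exp (α t / 2)` out of both losses gives `C₁(t, η) = exp (α t / 2) * I_η + c * exp (-β t)`,
a convex function of `t` whose slope at `0` is `α / 2 * I_η - β c`. Since `Ī_c` is `I_η` at
`η = 1 - c`, the relation `2 β c / α = Ī_c` says that this slope vanishes at `η = 1 - c`. As `I_η`
is affine in `η`, the slope is then `-(η - (1 - c)) * α * sinh (α / 2)`, so `t` times the slope is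
nonnegative wherever `t (η - (1 - c)) ≤ 0`; a convex function lies above its tangent line.
-/

open Real

theorem self_mul_sinh_nonneg (x : ℝ) : 0 ≤ x * sinh x := by
  obtain hx | hx := le_total 0 x
  · exact mul_nonneg hx (sinh_nonneg_iff.2 hx)
  · exact mul_nonneg_of_nonpos_of_nonpos hx (sinh_nonpos_iff.2 hx)

theorem Ieta_nonneg (α : ℝ) {η : ℝ} (hη : η ∈ Set.Icc (0 : ℝ) 1) : 0 ≤ Ieta α η :=
  add_nonneg (mul_nonneg hη.1 (exp_nonneg _)) (mul_nonneg (sub_nonneg.2 hη.2) (exp_nonneg _))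

theorem Ieta_one_sub (c α : ℝ) : Ieta α (1 - c) = Ibar c α := by
  unfold Ieta Ibar
  ring

theorem Ieta_sub_Ieta (α η η' : ℝ) :
    Ieta α η - Ieta α η' = -2 * (η - η') * sinh (α / 2) := by
  rw [sinh_eq, Ieta, Ieta, neg_div]
  ring

theorem condRiskSurrogate_eq (c α β t η : ℝ) :
    condRiskSurrogate c α β t η = exp (α * t / 2) * Ieta α η + c * exp (-β * t) := by
  have exp_pos_label : exp (α * (t - 1) / 2) = exp (α * t / 2) * exp (-α / 2) := by
    rw [← exp_add]
    ring_nf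
  have exp_neg_label : exp (α * (t - -1) / 2) = exp (α * t / 2) * exp (α / 2) := by
    rw [← exp_add]
    ring_nf
  rw [condRiskSurrogate, surrogateRejectionLoss, surrogateRejectionLoss, exp_pos_label,
    exp_neg_label, Ieta]
  ring

theorem condRiskSurrogate_zero (c α β η : ℝ) :
    condRiskSurrogate c α β 0 η = Ieta α η + c := by
  simp [condRiskSurrogate_eq]

theorem condRiskSurrogate_zero_add_slope_mul_le {c α η : ℝ} (hc : 0 ≤ c) (hI : 0 ≤ Ieta α η)
    (β t : ℝ) :
    condRiskSurrogate c α β 0 η + (α / 2 * Ieta α η - β * c) * t ≤ condRiskSurrogate c α β t η :=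
  calc
    condRiskSurrogate c α β 0 η + (α / 2 * Ieta α η - β * c) * t
      = (α * t / 2 + 1) * Ieta α η + c * (-β * t + 1) := by
        rw [condRiskSurrogate_zero]
        ring
    _ ≤ exp (α * t / 2) * Ieta α η + c * exp (-β * t) := by
        gcongr <;> exact add_one_le_exp _
    _ = condRiskSurrogate c α β t η := (condRiskSurrogate_eq c α β t η).symm

theorem half_mul_Ieta_sub_eq_mul_sinh {c α β : ℝ} (hrel : 2 * β * c = Ibar c α * α) (η : ℝ) :
    α / 2 * Ieta α η - β * c = -2 * (η - (1 - c)) * (α / 2 * sinh (α / 2)) := by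
  have hI : Ieta α η - Ibar c α = -2 * (η - (1 - c)) * sinh (α / 2) := by
    rw [← Ieta_one_sub, Ieta_sub_Ieta]
  linear_combination α / 2 * hI - hrel / 2

theorem condRiskSurrogate_inf_mismatch_region_general {c α β η : ℝ} (hc : 0 ≤ c)
    (hrel : 2 * β * c = Ibar c α * α) (hη : η ∈ Set.Icc (0 : ℝ) 1) :
    IsLeast ((fun t => condRiskSurrogate c α β t η) ''
      {t : ℝ | t * (η - (1 - c)) ≤ 0}) (condRiskSurrogate c α β 0 η) ∧
    condRiskSurrogate c α β 0 η = Ieta α η + c := by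
  refine ⟨⟨⟨0, by simp, rfl⟩, ?_⟩, condRiskSurrogate_zero c α β η⟩
  rintro _ ⟨t, ht : t * (η - (1 - c)) ≤ 0, rfl⟩
  have tangent_nonneg : 0 ≤ (α / 2 * Ieta α η - β * c) * t :=
    calc
      0 ≤ -2 * (t * (η - (1 - c))) * (α / 2 * sinh (α / 2)) :=
        mul_nonneg (by linarith) (self_mul_sinh_nonneg _)
      _ = (α / 2 * Ieta α η - β * c) * t := by
        rw [half_mul_Ieta_sub_eq_mul_sinh hrel]
        ring
  exact (le_add_of_nonneg_right tangent_nonneg).trans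
    (condRiskSurrogate_zero_add_slope_mul_le hc (Ieta_nonneg α hη) β t)

/-- under the constraint `2βc/α = Ī_c`, the infimum of `C₁(t, η)` over
`{t : t·(η − (1 − c)) ≤ 0}` is attained at `t = 0` and equals `C₁(0, η) = I_η + c`. -/
theorem condRiskSurrogate_inf_mismatch_region (c α β η : ℝ)
    (hc : 0 < c) (hc1 : c < 1) (hα : 0 < α) (hβ : 0 < β)
    (hrel : 2 * β * c / α = Ibar c α)
    (hη : η ∈ Set.Icc (0 : ℝ) 1) :
    IsLeast ((fun t => condRiskSurrogate c α β t η) ''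
      {t : ℝ | t * (η - (1 - c)) ≤ 0}) (condRiskSurrogate c α β 0 η) ∧
    condRiskSurrogate c α β 0 η = Ieta α η + c :=
  condRiskSurrogate_inf_mismatch_region_general hc.le ((div_eq_iff hα.ne').1 hrel) hη
end

section
/- For all real numbers x and r with 0 < x < 1 and 0 < r < 1, one has (1 + x)^r ≤ 1 + r·x + r·(r − 1)·x²/4. -/
/-!
The gap between the two sides vanishes at `0`, and its derivative at `x` is
`r * (1 + (r - 1) * x / 2 - (1 + x) ^ (r - 1))`, which is nonpositive on `(-1, 0)` and nonnegative
on `(0, 1)`, so `0` is a minimum. For negative `x` the sign comes from Bernoulli's inequality for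
the exponent `r - 1 ≤ 0`; for positive `x` the chord bound `(1 + x)⁻¹ ≤ 1 - x / 2` reduces it to
Bernoulli's inequality for the exponent `1 - r`.
-/

open Set

theorem one_add_mul_self_le_rpow_one_add_of_nonpos {x q : ℝ} (hx : -1 < x) (hq : q ≤ 0) :
    1 + q * x ≤ (1 + x) ^ q := by
  have hpos : 0 < 1 + x := by linarith
  have hlog : Real.log (1 + x) ≤ x := by linarith [Real.log_le_sub_one_of_pos hpos]
  calc 1 + q * x ≤ Real.log (1 + x) * q + 1 := by
        linarith [mul_le_mul_of_nonpos_left hlog hq]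
    _ ≤ Real.exp (Real.log (1 + x) * q) := Real.add_one_le_exp _
    _ = (1 + x) ^ q := (Real.rpow_def_of_pos hpos q).symm

theorem inv_one_add_le_one_sub_half {x : ℝ} (hx₀ : 0 ≤ x) (hx₁ : x ≤ 1) :
    (1 + x)⁻¹ ≤ 1 - x / 2 := by
  rw [inv_le_iff_one_le_mul₀ (by linarith)]
  nlinarith [mul_nonneg hx₀ (sub_nonneg.2 hx₁)]

theorem rpow_one_add_le_one_add_mul_half {x q : ℝ} (hx₀ : 0 ≤ x) (hx₁ : x ≤ 1)
    (hq₀ : -1 ≤ q) (hq₁ : q ≤ 0) : (1 + x) ^ q ≤ 1 + q * x / 2 := by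
  have hpos : 0 ≤ 1 + x := by linarith
  calc (1 + x) ^ q = ((1 + x)⁻¹) ^ (-q) := by rw [Real.inv_rpow hpos, Real.rpow_neg hpos, inv_inv]
    _ ≤ (1 + -(x / 2)) ^ (-q) :=
      Real.rpow_le_rpow (inv_nonneg.2 hpos) (inv_one_add_le_one_sub_half hx₀ hx₁) (by linarith)
    _ ≤ 1 + -q * -(x / 2) :=
      rpow_one_add_le_one_add_mul_self (by linarith) (by linarith) (by linarith)
    _ = 1 + q * x / 2 := by ring

/-- The right-hand side minus the left-hand side of the refined Bernoulli inequality with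
exponent `r`, as a function of `x`. -/
noncomputable def bernoulliGap (r x : ℝ) : ℝ :=
  1 + r * x + r * (r - 1) * x ^ 2 / 4 - (1 + x) ^ r

theorem bernoulliGap_zero (r : ℝ) : bernoulliGap r 0 = 0 := by
  simp [bernoulliGap]

theorem continuous_bernoulliGap {r : ℝ} (hr : 0 ≤ r) : Continuous (bernoulliGap r) := by
  have hrpow : Continuous fun x : ℝ ↦ (1 + x) ^ r :=
    (continuous_const.add continuous_id).rpow_const fun _ ↦ Or.inr hr
  have hquad : Continuous fun x : ℝ ↦ 1 + r * x + r * (r - 1) * x ^ 2 / 4 := by fun_prop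
  exact hquad.sub hrpow

theorem hasDerivAt_bernoulliGap (r : ℝ) {x : ℝ} (hx : -1 < x) :
    HasDerivAt (bernoulliGap r) (r * (1 + (r - 1) * x / 2 - (1 + x) ^ (r - 1))) x := by
  have hrpow : HasDerivAt (fun y : ℝ ↦ (1 + y) ^ r) (1 * r * (1 + x) ^ (r - 1)) x :=
    ((hasDerivAt_id x).const_add 1).rpow_const (Or.inl (show 1 + x ≠ 0 by linarith))
  have hlin : HasDerivAt (fun y : ℝ ↦ 1 + r * y) (r * 1) x :=
    ((hasDerivAt_id x).const_mul r).const_add 1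
  have hquad : HasDerivAt (fun y : ℝ ↦ r * (r - 1) * y ^ 2 / 4) (r * (r - 1) * (2 * x) / 4) x := by
    simpa using ((hasDerivAt_pow 2 x).const_mul (r * (r - 1))).div_const 4
  exact ((hlin.add hquad).sub hrpow).congr_deriv (by ring)

theorem isMinOn_bernoulliGap {r : ℝ} (hr₀ : 0 ≤ r) (hr₁ : r ≤ 1) :
    IsMinOn (bernoulliGap r) (Icc (-1) 1) 0 := by
  have hcont := continuous_bernoulliGap hr₀
  have hderiv {x : ℝ} (hx : -1 < x) := hasDerivAt_bernoulliGap r hx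
  refine isMinOn_Icc_of_deriv hcont.continuousAt hcont.continuousAt hcont.continuousAt
    (fun x hx ↦ (hderiv hx.1).differentiableAt.differentiableWithinAt)
    (fun x hx ↦ (hderiv (by linarith [hx.1])).differentiableAt.differentiableWithinAt)
    (fun x hx ↦ ?nonpos) (fun x hx ↦ ?nonneg)
  case nonpos =>
    rw [(hderiv hx.1).deriv]
    have hbernoulli := one_add_mul_self_le_rpow_one_add_of_nonpos hx.1 (sub_nonpos.2 hr₁)
    have hsign : 0 ≤ (r - 1) * x := mul_nonneg_of_nonpos_of_nonpos (sub_nonpos.2 hr₁) hx.2.le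
    exact mul_nonpos_of_nonneg_of_nonpos hr₀ (by linarith)
  case nonneg =>
    rw [(hderiv (by linarith [hx.1])).deriv]
    exact mul_nonneg hr₀ <| sub_nonneg.2 <|
      rpow_one_add_le_one_add_mul_half hx.1.le hx.2.le (by linarith) (by linarith)

theorem bernoulli_type_inequality_general {x r : ℝ} (hx₀ : -1 ≤ x) (hx₁ : x ≤ 1)
    (hr₀ : 0 ≤ r) (hr₁ : r ≤ 1) :
    (1 + x) ^ r ≤ 1 + r * x + r * (r - 1) * x ^ 2 / 4 := by
  have hgap : bernoulliGap r 0 ≤ bernoulliGap r x := isMinOn_bernoulliGap hr₀ hr₁ ⟨hx₀, hx₁⟩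
  rw [bernoulliGap_zero] at hgap
  exact sub_nonneg.1 hgap

/-- Bernoulli-type inequality: for all `x, r ∈ (0, 1)`,
`(1 + x)^r ≤ 1 + r·x + r·(r − 1)·x²/4`. -/
theorem bernoulli_type_inequality (x r : ℝ)
    (hx0 : 0 < x) (hx1 : x < 1) (hr0 : 0 < r) (hr1 : r < 1) :
    (1 + x) ^ r ≤ 1 + r * x + r * (r - 1) * x ^ 2 / 4 :=
  bernoulli_type_inequality_general (by linarith) hx1.le hr0.le hr1.le
end

section
/- Let (X, 𝒜) be a measurable space, μ a probability measure on X, η : X → [0,1] measurable, and c ∈ (0,1). Then the infimum over all measurable r : X → ℝ of the rejection risk R₂(r) = ∫ C₂(r(x), η(x)) dμ(x) equals ∫ min{c, 1 − η(x)} dμ(x); in particular this infimum is attained by the measurable rejector r*(x) = η(x) − (1 − c), so the (ℓ₂, all-measurable-functions)-minimizability gap vanishes. -/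
open MeasureTheory

/-- The conditional risk of the induced rejection loss:
`C₂(t, η) = η·ℓ₂(t, +1) + (1 − η)·ℓ₂(t, −1)`. -/
noncomputable def condRiskInduced (c t η : ℝ) : ℝ :=
  η * inducedRejectionLoss c t 1 + (1 - η) * inducedRejectionLoss c t (-1)

theorem condRiskInduced_eq_ite (c t η : ℝ) :
    condRiskInduced c t η = if t ≤ 0 then c else 1 - η := by
  have one_ne_neg_one : (1 : ℝ) ≠ -1 := by norm_num
  rcases le_or_gt t 0 with ht | ht
  · simp only [condRiskInduced, inducedRejectionLoss, one_ne_neg_one, ht, ht.not_gt, if_true,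
      if_false]
    ring
  · simp only [condRiskInduced, inducedRejectionLoss, one_ne_neg_one, ht, ht.not_ge, if_true,
      if_false]
    ring

theorem min_le_condRiskInduced (c t η : ℝ) : min c (1 - η) ≤ condRiskInduced c t η := by
  rw [condRiskInduced_eq_ite]
  exact inf_le_ite _ _ _

theorem condRiskInduced_sub_one_sub_self (c η : ℝ) :
    condRiskInduced c (η - (1 - c)) η = min c (1 - η) := by
  have reject_iff : η - (1 - c) ≤ 0 ↔ c ≤ 1 - η := by constructor <;> intro h <;> linarith
  simp only [condRiskInduced_eq_ite, reject_iff, min_def]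

section Integral

variable {X : Type*} [MeasurableSpace X] {μ : Measure X} [IsFiniteMeasure μ] {r η : X → ℝ}

theorem integrable_condRiskInduced (hr : Measurable r) (hη : Integrable η μ) (c : ℝ) :
    Integrable (fun x => condRiskInduced c (r x) (η x)) μ := by
  classical
  simp only [condRiskInduced_eq_ite]
  have measurableSet_reject : MeasurableSet {x | r x ≤ 0} := measurableSet_le hr measurable_const
  exact Integrable.piecewise measurableSet_reject (integrable_const c).integrableOn
    ((integrable_const 1).sub hη).integrableOn

theorem integral_min_le_integral_condRiskInduced (hr : Measurable r) (hη : Integrable η μ)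
    (c : ℝ) : ∫ x, min c (1 - η x) ∂μ ≤ ∫ x, condRiskInduced c (r x) (η x) ∂μ :=
  integral_mono ((integrable_const c).inf ((integrable_const 1).sub hη))
    (integrable_condRiskInduced hr hη c) fun x => min_le_condRiskInduced c (r x) (η x)

end Integral

theorem rejection_risk_inf_attained_general {X : Type*} [MeasurableSpace X]
    (μ : Measure X) [IsFiniteMeasure μ] (η : X → ℝ) (hη : Integrable η μ) (c : ℝ) :
    IsLeast {y : ℝ | ∃ r : X → ℝ, Measurable r ∧ y = ∫ x, condRiskInduced c (r x) (η x) ∂μ}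
      (∫ x, min c (1 - η x) ∂μ) ∧
    (∫ x, condRiskInduced c (η x - (1 - c)) (η x) ∂μ) = ∫ x, min c (1 - η x) ∂μ := by
  refine ⟨⟨?attained, ?lower_bound⟩, by simp only [condRiskInduced_sub_one_sub_self]⟩
  case attained =>
    obtain ⟨η', hη', η_ae_eq⟩ := hη.aemeasurable
    refine ⟨fun x => η' x - (1 - c), hη'.sub_const _, integral_congr_ae ?_⟩
    filter_upwards [η_ae_eq] with x hx
    rw [← hx, condRiskInduced_sub_one_sub_self]
  case lower_bound =>
    rintro _ ⟨r, hr, rfl⟩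
    exact integral_min_le_integral_condRiskInduced hr hη c

/-- the infimum of the rejection risk `R₂(r) = ∫ C₂(r(x), η(x)) dμ(x)`
over all measurable rejectors `r : X → ℝ` equals `∫ min{c, 1 − η(x)} dμ(x)`, and is
attained by the measurable rejector `r*(x) = η(x) − (1 − c)`: the minimizability gap
vanishes. -/
theorem rejection_risk_inf_attained {X : Type*} [MeasurableSpace X]
    (μ : Measure X) [IsProbabilityMeasure μ]
    (η : X → ℝ) (hη : Measurable η) (hη01 : ∀ x, η x ∈ Set.Icc (0 : ℝ) 1)
    (c : ℝ) (hc : 0 < c) (hc1 : c < 1) :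
    IsLeast {y : ℝ | ∃ r : X → ℝ, Measurable r ∧ y = ∫ x, condRiskInduced c (r x) (η x) ∂μ}
      (∫ x, min c (1 - η x) ∂μ) ∧
    (∫ x, condRiskInduced c (η x - (1 - c)) (η x) ∂μ) = ∫ x, min c (1 - η x) ∂μ :=
  rejection_risk_inf_attained_general μ η
    (.of_mem_Icc 0 1 hη.aemeasurable (ae_of_all μ hη01)) c
end
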